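/- arXiv:1401.0903 — 2 statements merged into one kernel-verified Lean document; each statement's English description precedes it below -/
import Mathlib

section
/- Let Φ be a Hawkes kernel matrix satisfying hypothesis (H) and let Ψ = Σ_{k=1}^∞ Φ^{⋆k}. Then for every complex number z with Re(z) ≤ 0, the matrix I − Φ̂(z) is invertible and (I − Φ̂(z))^{−1} = I + Ψ̂(z), where I is the D×D identity matrix. -/
open MeasureTheory Matrix Filter Set

/-- Entrywise matrix convolution:
`(A ⋆ B)^{ij}(t) = ∑_{k} ∫ A^{ik}(s) B^{kj}(t - s) ds`. -/
noncomputable def mconv (D : ℕ) (A B : ℝ → Matrix (Fin D) (Fin D) ℝ) :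
    ℝ → Matrix (Fin D) (Fin D) ℝ :=
  fun t => Matrix.of fun i j => ∑ k : Fin D, ∫ s : ℝ, A s i k * B (t - s) k j

/-- `mconvIter D Φ k` is the `(k+1)`-fold matrix convolution `Φ^{⋆(k+1)}`. -/
noncomputable def mconvIter (D : ℕ) (Φ : ℝ → Matrix (Fin D) (Fin D) ℝ) :
    ℕ → ℝ → Matrix (Fin D) (Fin D) ℝ
  | 0 => Φ
  | (k + 1) => mconv D Φ (mconvIter D Φ k)

/-- `Ψ = ∑_{k=1}^∞ Φ^{⋆k}`, defined entrywise as a pointwise sum. -/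
noncomputable def hawkesPsi (D : ℕ) (Φ : ℝ → Matrix (Fin D) (Fin D) ℝ) :
    ℝ → Matrix (Fin D) (Fin D) ℝ :=
  fun t => Matrix.of fun i j => ∑' k : ℕ, mconvIter D Φ k t i j

/-- The matrix `‖Φ‖` of `L¹` norms: `‖Φ‖^{ij} = ∫ φ^{ij}(t) dt` (entries nonnegative). -/
noncomputable def kernelNorm (D : ℕ) (Φ : ℝ → Matrix (Fin D) (Fin D) ℝ) :
    Matrix (Fin D) (Fin D) ℝ :=
  Matrix.of fun i j => ∫ t : ℝ, Φ t i j

/-- A Hawkes kernel matrix: measurable, nonnegative, integrable and causal entries. -/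
def IsHawkesKernel (D : ℕ) (Φ : ℝ → Matrix (Fin D) (Fin D) ℝ) : Prop :=
  (∀ i j, Measurable fun t => Φ t i j) ∧
  (∀ t, ∀ i j, 0 ≤ Φ t i j) ∧
  (∀ i j, Integrable fun t => Φ t i j) ∧
  (∀ t < (0 : ℝ), Φ t = 0)

/-- Hypothesis (H): the spectral radius of `‖Φ‖` is strictly smaller than 1. -/
def HypothesisH (D : ℕ) (Φ : ℝ → Matrix (Fin D) (Fin D) ℝ) : Prop :=
  spectralRadius ℂ ((kernelNorm D Φ).map Complex.ofReal) < 1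

/-- `q(t) = Σ Ψ(-t)ᵀ Σ⁻¹`. -/
noncomputable def hawkesQ (D : ℕ) (Φ : ℝ → Matrix (Fin D) (Fin D) ℝ)
    (S : Matrix (Fin D) (Fin D) ℝ) : ℝ → Matrix (Fin D) (Fin D) ℝ :=
  fun t => S * (hawkesPsi D Φ (-t))ᵀ * S⁻¹

/-- The conditional-expectation matrix
`g(t) = Ψ(t) + Σ Ψ(-t)ᵀ Σ⁻¹ + (Ψ ⋆ q)(t)`. -/
noncomputable def hawkesG (D : ℕ) (Φ : ℝ → Matrix (Fin D) (Fin D) ℝ)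
    (S : Matrix (Fin D) (Fin D) ℝ) : ℝ → Matrix (Fin D) (Fin D) ℝ :=
  fun t => hawkesPsi D Φ t + hawkesQ D Φ S t +
    mconv D (hawkesPsi D Φ) (hawkesQ D Φ S) t

/-- Entrywise Laplace transform `F̂(z) = ∫ F(t) e^{zt} dt`. -/
noncomputable def mlaplace (D : ℕ) (F : ℝ → Matrix (Fin D) (Fin D) ℝ) (z : ℂ) :
    Matrix (Fin D) (Fin D) ℂ :=
  Matrix.of fun i j => ∫ t : ℝ, (F t i j : ℂ) * Complex.exp (z * t)

/-!
Tilting by `e^{zt}` turns convolutions into convolutions, so the Laplace transform at `z` sends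
`Φ^{⋆k}` to `Φ̂(z)^k`. Likewise the matrix `N` of `L¹` norms of the tilted kernel `Φ(t) e^{zt}`
satisfies `‖Φ^{⋆k}(t) e^{zt}‖₁ ≤ N^k` entrywise, and by Gelfand's formula `∑ N^k` converges as
soon as the spectral radius of `N` is smaller than `1`. The series `Ψ` may then be integrated term
by term, which gives `Ψ̂(z) = ∑_{k ≥ 1} Φ̂(z)^k`, a Neumann series. For a causal nonnegative kernel
and `Re z ≤ 0` one has `N ≤ ‖Φ‖` entrywise, and the spectral radius is monotone on nonnegative
matrices.
-/

open scoped Convolution ENNReal NNReal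

section BanachAlgebra

variable {A B : Type*} [NormedRing A] [NormedAlgebra ℂ A] [CompleteSpace A]
  [NormedRing B] [NormedAlgebra ℂ B] [CompleteSpace B]

theorem eventually_nnnorm_pow_le_of_spectralRadius_lt {a : A} {r : ℝ≥0}
    (h : spectralRadius ℂ a < r) : ∀ᶠ n : ℕ in atTop, ‖a ^ n‖₊ ≤ r ^ n := by
  have gelfand := spectrum.pow_nnnorm_pow_one_div_tendsto_nhds_spectralRadius a
  filter_upwards [gelfand.eventually_lt_const h, eventually_gt_atTop 0] with n hn hn0
  rw [← ENNReal.coe_le_coe, ENNReal.coe_pow, ← ENNReal.rpow_natCast]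
  rw [one_div] at hn
  exact (ENNReal.rpow_inv_le_iff (by exact_mod_cast hn0)).1 hn.le

theorem summable_norm_pow_of_spectralRadius_lt_one {a : A} (h : spectralRadius ℂ a < 1) :
    Summable fun n : ℕ => ‖a ^ n‖ := by
  obtain ⟨r, hr, hr1⟩ := ENNReal.lt_iff_exists_nnreal_btwn.1 h
  refine .of_norm_bounded_eventually_nat
    (summable_geometric_of_lt_one r.coe_nonneg (by exact_mod_cast hr1)) ?_
  filter_upwards [eventually_nnnorm_pow_le_of_spectralRadius_lt hr] with n hn
  rw [norm_norm]
  exact_mod_cast hn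

theorem spectralRadius_le_of_norm_pow_le {a : A} {b : B} (h : ∀ n : ℕ, ‖a ^ n‖ ≤ ‖b ^ n‖) :
    spectralRadius ℂ a ≤ spectralRadius ℂ b :=
  le_of_tendsto_of_tendsto' (spectrum.pow_nnnorm_pow_one_div_tendsto_nhds_spectralRadius a)
    (spectrum.pow_nnnorm_pow_one_div_tendsto_nhds_spectralRadius b) fun n =>
      ENNReal.rpow_le_rpow (by exact_mod_cast h n) (by positivity)

end BanachAlgebra

theorem one_sub_mul_one_add_of_hasSum_pow_succ {R : Type*} [Ring R] [TopologicalSpace R]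
    [IsTopologicalRing R] [T2Space R] {x s : R} (h : HasSum (fun k : ℕ => x ^ (k + 1)) s) :
    (1 - x) * (1 + s) = 1 := by
  have hx : Summable (x ^ ·) := (summable_nat_add_iff 1).1 h.summable
  rw [← h.tsum_eq, ← pow_zero x, ← hx.tsum_eq_zero_add, pow_zero, hx.one_sub_mul_tsum_pow]

theorem matrix_mul_apply_le_mul_apply_of_nonneg_left {l m n R : Type*} [Fintype m] [Semiring R]
    [PartialOrder R] [IsOrderedRing R] {A : Matrix l m R} {B C : Matrix m n R}
    (hA : ∀ i j, 0 ≤ A i j) (hBC : ∀ i j, B i j ≤ C i j) (i : l) (j : n) :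
    (A * B) i j ≤ (A * C) i j := by
  simp only [Matrix.mul_apply]
  exact Finset.sum_le_sum fun k _ => mul_le_mul_of_nonneg_left (hBC k j) (hA i k)

section LinftyOpNorm

variable {m n R S : Type*} [Fintype m] [Fintype n] [SeminormedAddCommGroup R]
  [SeminormedAddCommGroup S]

attribute [local instance] Matrix.linftyOpSeminormedAddCommGroup

theorem norm_apply_le_linfty_opNorm (A : Matrix m n R) (i : m) (j : n) : ‖A i j‖ ≤ ‖A‖ := by
  rw [← coe_nnnorm, ← coe_nnnorm, NNReal.coe_le_coe, Matrix.linfty_opNNNorm_def]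
  calc ‖A i j‖₊ ≤ ∑ l, ‖A i l‖₊ :=
        Finset.single_le_sum (f := fun l => ‖A i l‖₊) (fun _ _ => zero_le) (Finset.mem_univ j)
    _ ≤ _ := Finset.le_sup (f := fun i => ∑ l, ‖A i l‖₊) (Finset.mem_univ i)

theorem linfty_opNorm_le_of_norm_apply_le {A : Matrix m n R} {B : Matrix m n S}
    (h : ∀ i j, ‖A i j‖ ≤ ‖B i j‖) : ‖A‖ ≤ ‖B‖ := by
  rw [← coe_nnnorm, ← coe_nnnorm, NNReal.coe_le_coe, Matrix.linfty_opNNNorm_def,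
    Matrix.linfty_opNNNorm_def]
  exact Finset.sup_mono_fun fun i _ => Finset.sum_le_sum fun j _ => h i j

end LinftyOpNorm

section MatrixPow

variable {n : Type*} [Fintype n] [DecidableEq n]

theorem norm_matrix_pow_apply_le {R : Type*} [SeminormedRing R] [NormOneClass R] {A : Matrix n n R}
    {B : Matrix n n ℝ} (h : ∀ i j, ‖A i j‖ ≤ B i j) (k : ℕ) (i j : n) :
    ‖(A ^ k) i j‖ ≤ (B ^ k) i j := by
  induction k generalizing i j with
  | zero => by_cases hij : i = j <;> simp [hij]
  | succ k ih =>
    simp only [pow_succ, Matrix.mul_apply]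
    refine norm_sum_le_of_le _ fun l _ => (norm_mul_le _ _).trans ?_
    exact mul_le_mul (ih i l) (h l j) (norm_nonneg _) ((norm_nonneg _).trans (ih i l))

theorem matrix_map_ofReal_pow (M : Matrix n n ℝ) (k : ℕ) :
    M.map Complex.ofReal ^ k = (M ^ k).map Complex.ofReal :=
  (Matrix.map_pow M Complex.ofRealHom k).symm

attribute [local instance] Matrix.linftyOpNormedRing Matrix.linftyOpNormedAlgebra

theorem summable_matrix_pow_apply_of_spectralRadius_lt_one {M : Matrix n n ℝ}
    (h : spectralRadius ℂ (M.map Complex.ofReal) < 1) (i j : n) :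
    Summable fun k : ℕ => (M ^ k) i j := by
  have : CompleteSpace (Matrix n n ℂ) := FiniteDimensional.complete ℂ _
  refine .of_norm_bounded (summable_norm_pow_of_spectralRadius_lt_one h) fun k => ?_
  simpa only [matrix_map_ofReal_pow, Matrix.map_apply, Complex.norm_real] using
    norm_apply_le_linfty_opNorm (M.map Complex.ofReal ^ k) i j

theorem spectralRadius_le_of_norm_apply_le {A : Matrix n n ℂ} {B : Matrix n n ℝ}
    (h : ∀ i j, ‖A i j‖ ≤ B i j) :
    spectralRadius ℂ A ≤ spectralRadius ℂ (B.map Complex.ofReal) := by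
  have : CompleteSpace (Matrix n n ℂ) := FiniteDimensional.complete ℂ _
  refine spectralRadius_le_of_norm_pow_le fun k => linfty_opNorm_le_of_norm_apply_le fun i j => ?_
  rw [matrix_map_ofReal_pow, Matrix.map_apply, Complex.norm_real]
  exact (norm_matrix_pow_apply_le h k i j).trans (Real.le_norm_self _)

end MatrixPow

theorem integral_norm_convolution_le {G E F H : Type*} [AddGroup G] [MeasurableSpace G]
    [MeasurableAdd₂ G] [MeasurableNeg G] {μ : Measure G} [SFinite μ] [μ.IsAddRightInvariant]
    [NormedAddCommGroup E] [NormedSpace ℝ E] [NormedAddCommGroup F] [NormedSpace ℝ F]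
    [NormedAddCommGroup H] [NormedSpace ℝ H] (L : E →L[ℝ] F →L[ℝ] H) {f : G → E} {g : G → F}
    (hf : Integrable f μ) (hg : Integrable g μ) :
    ∫ x, ‖(f ⋆[L, μ] g) x‖ ∂μ ≤ ‖L‖ * ((∫ x, ‖f x‖ ∂μ) * ∫ x, ‖g x‖ ∂μ) := by
  let mulL := ContinuousLinearMap.mul ℝ ℝ
  have pointwise : ∀ᵐ x ∂μ, ‖(f ⋆[L, μ] g) x‖ ≤
      ‖L‖ * ((fun y => ‖f y‖) ⋆[mulL, μ] fun y => ‖g y‖) x := by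
    filter_upwards [hf.norm.ae_convolution_exists mulL hg.norm] with x hx
    rw [convolution_def, convolution_def, ← integral_const_mul]
    refine norm_integral_le_of_norm_le (hx.integrable.const_mul _) (.of_forall fun y => ?_)
    exact (L.le_opNorm₂ _ _).trans_eq (mul_assoc _ _ _)
  calc ∫ x, ‖(f ⋆[L, μ] g) x‖ ∂μ
      ≤ ∫ x, ‖L‖ * ((fun y => ‖f y‖) ⋆[mulL, μ] fun y => ‖g y‖) x ∂μ :=
        integral_mono_ae (hf.integrable_convolution L hg).norm
          ((hf.norm.integrable_convolution mulL hg.norm).const_mul _) pointwise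
    _ = ‖L‖ * ((∫ x, ‖f x‖ ∂μ) * ∫ x, ‖g x‖ ∂μ) := by
        rw [integral_const_mul, integral_convolution mulL hf.norm hg.norm]
        rfl

/-- The exponential tilt `t ↦ f(t) e^{zt}`, whose integral is the Laplace transform of `f` at `z`
in the sign convention of `mlaplace`. -/
noncomputable def expTilt (z : ℂ) (f : ℝ → ℝ) : ℝ → ℂ :=
  fun t => f t * Complex.exp (z * t)

section ExpTilt

variable {z : ℂ} {f : ℝ → ℝ}

theorem expTilt_convolution (z : ℂ) (f g : ℝ → ℝ) :
    expTilt z (f ⋆[ContinuousLinearMap.mul ℝ ℝ] g) =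
      expTilt z f ⋆[ContinuousLinearMap.mul ℝ ℂ] expTilt z g := by
  ext t
  rw [expTilt, convolution_def, convolution_def, ← integral_complex_ofReal, ← integral_mul_const]
  congr 1 with s
  have exp_split : Complex.exp (z * t) =
      Complex.exp (z * s) * Complex.exp (z * ((t - s : ℝ) : ℂ)) := by
    rw [← Complex.exp_add, Complex.ofReal_sub]
    ring_nf
  simp only [ContinuousLinearMap.mul_apply', expTilt, exp_split, Complex.ofReal_mul]
  ring

theorem norm_expTilt_le (hf : ∀ t < 0, f t = 0) (hz : z.re ≤ 0) (t : ℝ) :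
    ‖expTilt z f t‖ ≤ ‖f t‖ := by
  rw [expTilt, norm_mul, Complex.norm_real, Complex.norm_exp, Complex.re_mul_ofReal]
  rcases lt_or_ge t 0 with ht | ht
  · simp [hf t ht]
  · exact mul_le_of_le_one_right (norm_nonneg _)
      (Real.exp_le_one_iff.2 (mul_nonpos_of_nonpos_of_nonneg hz ht))

theorem integrable_expTilt (hf : Integrable f) (hcausal : ∀ t < 0, f t = 0) (hz : z.re ≤ 0) :
    Integrable (expTilt z f) :=
  hf.mono (hf.ofReal.1.mul (by fun_prop)) (.of_forall (norm_expTilt_le hcausal hz))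

end ExpTilt

/-- Absolute convergence of the Laplace transform of `A` at `z`. -/
def LaplaceIntegrable (D : ℕ) (A : ℝ → Matrix (Fin D) (Fin D) ℝ) (z : ℂ) : Prop :=
  ∀ i j, Integrable (expTilt z fun t => A t i j)

/-- The matrix of the `L¹` norms of the entries of `t ↦ A(t) e^{zt}`, an exponentially weighted
version of `kernelNorm` that also makes sense for signed, non-causal `A`. -/
noncomputable def laplaceNorm (D : ℕ) (A : ℝ → Matrix (Fin D) (Fin D) ℝ) (z : ℂ) :
    Matrix (Fin D) (Fin D) ℝ :=
  Matrix.of fun i j => ∫ t : ℝ, ‖expTilt z (fun t => A t i j) t‖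

section MatrixKernel

variable {D : ℕ} {A B Φ : ℝ → Matrix (Fin D) (Fin D) ℝ} {z : ℂ}

theorem mlaplace_apply (i j : Fin D) :
    mlaplace D A z i j = ∫ t, expTilt z (fun t => A t i j) t :=
  rfl

theorem laplaceNorm_apply (i j : Fin D) :
    laplaceNorm D A z i j = ∫ t, ‖expTilt z (fun t => A t i j) t‖ :=
  rfl

theorem laplaceNorm_nonneg (i j : Fin D) : 0 ≤ laplaceNorm D A z i j :=
  integral_nonneg fun _ => norm_nonneg _

theorem expTilt_mconv (z : ℂ) (A B : ℝ → Matrix (Fin D) (Fin D) ℝ) (i j : Fin D) (t : ℝ) :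
    expTilt z (fun t => mconv D A B t i j) t =
      ∑ k, ((expTilt z fun t => A t i k) ⋆[ContinuousLinearMap.mul ℝ ℂ]
        expTilt z fun t => B t k j) t := by
  simp only [← expTilt_convolution]
  simp only [expTilt, mconv, Matrix.of_apply, Complex.ofReal_sum, Finset.sum_mul, convolution_def,
    ContinuousLinearMap.mul_apply']

theorem LaplaceIntegrable.mconv (hA : LaplaceIntegrable D A z) (hB : LaplaceIntegrable D B z) :
    LaplaceIntegrable D (mconv D A B) z := fun i j => by
  rw [funext (expTilt_mconv z A B i j)]
  exact integrable_finsetSum _ fun k _ => (hA i k).integrable_convolution _ (hB k j)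

theorem mlaplace_mconv (hA : LaplaceIntegrable D A z) (hB : LaplaceIntegrable D B z) :
    mlaplace D (mconv D A B) z = mlaplace D A z * mlaplace D B z := by
  ext i j
  calc mlaplace D (mconv D A B) z i j
      = ∫ t, ∑ k, ((expTilt z fun t => A t i k) ⋆[ContinuousLinearMap.mul ℝ ℂ]
          expTilt z fun t => B t k j) t :=
        integral_congr_ae (.of_forall (expTilt_mconv z A B i j))
    _ = ∑ k, (∫ t, expTilt z (fun t => A t i k) t) * ∫ t, expTilt z (fun t => B t k j) t := by
        rw [integral_finsetSum _ fun k _ => (hA i k).integrable_convolution _ (hB k j)]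
        exact Finset.sum_congr rfl fun k _ => integral_convolution _ (hA i k) (hB k j)
    _ = (mlaplace D A z * mlaplace D B z) i j := by
        simp only [Matrix.mul_apply, mlaplace_apply]

theorem laplaceNorm_mconv_apply_le (hA : LaplaceIntegrable D A z) (hB : LaplaceIntegrable D B z)
    (i j : Fin D) :
    laplaceNorm D (mconv D A B) z i j ≤ (laplaceNorm D A z * laplaceNorm D B z) i j := by
  let conv (k : Fin D) := (expTilt z fun t => A t i k) ⋆[ContinuousLinearMap.mul ℝ ℂ]
    expTilt z fun t => B t k j
  have hconv (k : Fin D) : Integrable fun t => ‖conv k t‖ :=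
    ((hA i k).integrable_convolution _ (hB k j)).norm
  calc laplaceNorm D (mconv D A B) z i j
      ≤ ∫ t, ∑ k, ‖conv k t‖ :=
        integral_mono (hA.mconv hB i j).norm (integrable_finsetSum _ fun k _ => hconv k)
          fun t => (congrArg norm (expTilt_mconv z A B i j t)).trans_le (norm_sum_le _ _)
    _ = ∑ k, ∫ t, ‖conv k t‖ := integral_finsetSum _ fun k _ => hconv k
    _ ≤ ∑ k, laplaceNorm D A z i k * laplaceNorm D B z k j :=
        Finset.sum_le_sum fun k _ => by
          simpa only [ContinuousLinearMap.opNorm_mul, one_mul, laplaceNorm_apply] using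
            integral_norm_convolution_le (ContinuousLinearMap.mul ℝ ℂ) (hA i k) (hB k j)
    _ = (laplaceNorm D A z * laplaceNorm D B z) i j := (Matrix.mul_apply ..).symm

theorem LaplaceIntegrable.mconvIter (hΦ : LaplaceIntegrable D Φ z) :
    ∀ k, LaplaceIntegrable D (mconvIter D Φ k) z
  | 0 => hΦ
  | k + 1 => hΦ.mconv (hΦ.mconvIter k)

theorem mlaplace_mconvIter (hΦ : LaplaceIntegrable D Φ z) (k : ℕ) :
    mlaplace D (mconvIter D Φ k) z = mlaplace D Φ z ^ (k + 1) := by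
  induction k with
  | zero => rw [zero_add, pow_one, mconvIter]
  | succ k ih => rw [mconvIter, mlaplace_mconv hΦ (hΦ.mconvIter k), ih, pow_succ' _ (k + 1)]

theorem laplaceNorm_mconvIter_apply_le (hΦ : LaplaceIntegrable D Φ z) (k : ℕ) (i j : Fin D) :
    laplaceNorm D (mconvIter D Φ k) z i j ≤ (laplaceNorm D Φ z ^ (k + 1)) i j := by
  induction k generalizing i j with
  | zero => rw [zero_add, pow_one, mconvIter]
  | succ k ih =>
    rw [mconvIter, pow_succ' _ (k + 1)]
    exact (laplaceNorm_mconv_apply_le hΦ (hΦ.mconvIter k) i j).trans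
      (matrix_mul_apply_le_mul_apply_of_nonneg_left laplaceNorm_nonneg ih i j)

-- Where the series diverges, both sums take the default value `0`.
theorem expTilt_hawkesPsi (z : ℂ) (Φ : ℝ → Matrix (Fin D) (Fin D) ℝ) (i j : Fin D) (t : ℝ) :
    expTilt z (fun t => hawkesPsi D Φ t i j) t =
      ∑' k, expTilt z (fun t => mconvIter D Φ k t i j) t := by
  simp only [expTilt, hawkesPsi, Matrix.of_apply, Complex.ofReal_tsum, tsum_mul_right]

theorem hasSum_mlaplace_pow_succ (hΦ : LaplaceIntegrable D Φ z)
    (hρ : spectralRadius ℂ ((laplaceNorm D Φ z).map Complex.ofReal) < 1) :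
    HasSum (fun k : ℕ => mlaplace D Φ z ^ (k + 1)) (mlaplace D (hawkesPsi D Φ) z) := by
  simp only [← mlaplace_mconvIter hΦ]
  refine Pi.hasSum.2 fun i => Pi.hasSum.2 fun j => ?_
  have summable_pow := summable_matrix_pow_apply_of_spectralRadius_lt_one hρ i j
  have summable_norm : Summable fun k => laplaceNorm D (mconvIter D Φ k) z i j :=
    ((summable_nat_add_iff 1).2 summable_pow).of_nonneg_of_le (fun _ => laplaceNorm_nonneg i j)
      fun k => laplaceNorm_mconvIter_apply_le hΦ k i j
  have termwise := hasSum_integral_of_summable_integral_norm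
    (fun k => hΦ.mconvIter k i j) summable_norm
  simpa only [← expTilt_hawkesPsi, ← mlaplace_apply] using termwise

end MatrixKernel

section HawkesKernel

variable {D : ℕ} {Φ : ℝ → Matrix (Fin D) (Fin D) ℝ} {z : ℂ}

theorem IsHawkesKernel.apply_eq_zero (hΦ : IsHawkesKernel D Φ) (i j : Fin D) (t : ℝ)
    (ht : t < 0) : Φ t i j = 0 := by
  rw [hΦ.2.2.2 t ht, Matrix.zero_apply]

theorem IsHawkesKernel.laplaceIntegrable (hΦ : IsHawkesKernel D Φ) (hz : z.re ≤ 0) :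
    LaplaceIntegrable D Φ z := fun i j =>
  integrable_expTilt (hΦ.2.2.1 i j) (hΦ.apply_eq_zero i j) hz

theorem IsHawkesKernel.laplaceNorm_apply_le (hΦ : IsHawkesKernel D Φ) (hz : z.re ≤ 0)
    (i j : Fin D) : laplaceNorm D Φ z i j ≤ kernelNorm D Φ i j :=
  integral_mono (hΦ.laplaceIntegrable hz i j).norm (hΦ.2.2.1 i j) fun t =>
    (norm_expTilt_le (hΦ.apply_eq_zero i j) hz t).trans_eq (Real.norm_of_nonneg (hΦ.2.1 t i j))

theorem IsHawkesKernel.spectralRadius_laplaceNorm_le (hΦ : IsHawkesKernel D Φ)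
    (hz : z.re ≤ 0) :
    spectralRadius ℂ ((laplaceNorm D Φ z).map Complex.ofReal) ≤
      spectralRadius ℂ ((kernelNorm D Φ).map Complex.ofReal) :=
  spectralRadius_le_of_norm_apply_le fun i j => by
    rw [Matrix.map_apply, Complex.norm_real, Real.norm_of_nonneg (laplaceNorm_nonneg i j)]
    exact hΦ.laplaceNorm_apply_le hz i j

end HawkesKernel

theorem laplace_resolvent_inverse_general (D : ℕ) (Φ : ℝ → Matrix (Fin D) (Fin D) ℝ) (z : ℂ)
    (hΦ : LaplaceIntegrable D Φ z)
    (hρ : spectralRadius ℂ ((laplaceNorm D Φ z).map Complex.ofReal) < 1) :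
    IsUnit (1 - mlaplace D Φ z) ∧
      (1 - mlaplace D Φ z)⁻¹ = 1 + mlaplace D (hawkesPsi D Φ) z := by
  have neumann : (1 - mlaplace D Φ z) * (1 + mlaplace D (hawkesPsi D Φ) z) = 1 :=
    one_sub_mul_one_add_of_hasSum_pow_succ (hasSum_mlaplace_pow_succ hΦ hρ)
  exact ⟨.of_mul_eq_one _ neumann, Matrix.inv_eq_right_inv neumann⟩

/-- Under hypothesis (H), for every `z` with `Re z ≤ 0` the matrix
`I - Φ̂(z)` is invertible with inverse `I + Ψ̂(z)`. -/
theorem laplace_resolvent_inverse (D : ℕ) (hD : 0 < D)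
    (Φ : ℝ → Matrix (Fin D) (Fin D) ℝ)
    (hΦ : IsHawkesKernel D Φ) (hH : HypothesisH D Φ) :
    ∀ z : ℂ, z.re ≤ 0 →
      IsUnit (1 - mlaplace D Φ z) ∧
      (1 - mlaplace D Φ z)⁻¹ = 1 + mlaplace D (hawkesPsi D Φ) z :=
  fun z hz => laplace_resolvent_inverse_general D Φ z (hΦ.laplaceIntegrable hz)
    ((hΦ.spectralRadius_laplaceNorm_le hz).trans_lt hH)
end

section
/- Let Φ be a Hawkes kernel matrix satisfying hypothesis (H), Ψ = Σ_{k=1}^∞ Φ^{⋆k}, Σ a diagonal D×D matrix with strictly positive diagonal entries, and let g be the associated conditional-expectation matrix. If χ : ℝ → Matrix (Fin D) (Fin D) ℝ is any matrix-valued function whose entries are causal and integrable (not assumed nonnegative) such that g(t) = χ(t) + (χ ⋆ g)(t) for almost every t > 0, then χ(t) = Φ(t) for almost every t ∈ ℝ. In other words, Φ is the unique causal L¹ solution of the Wiener–Hopf system associated with g. -/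
/-!
Write `δ + F` for the matrix-valued measure with identity mass at `0` and density `F`. By the
Neumann series in the convolution algebra `L¹(ℝ)`, hypothesis (H) makes `δ + Ψ` the inverse of
`δ - Φ`, and the definition of `g` says that `δ + g = (δ + Ψ) ⋆ (δ + q)`: a Wiener–Hopf
factorization into a causal and an anticausal factor with anticausal inverse. The equation for `χ`
says that `(δ - χ) ⋆ (δ + g)` is anticausal. Dividing by `δ + q`, the causal measure
`(δ - χ) ⋆ (δ + Ψ)` is anticausal too, hence equal to `δ`, so `δ - χ = (δ + Ψ)⁻¹ = δ - Φ`.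

The measure `δ + F` is encoded as `PreQuasiregular.mk F`: the product of `PreQuasiregular` is
`(F, G) ↦ F + G + F * G`.
-/

open MeasureTheory Matrix Filter Set

open scoped Convolution Pointwise

theorem coeFn_L1_tsum {α E ι : Type*} [MeasurableSpace α] {μ : Measure α} [NormedAddCommGroup E]
    [CompleteSpace E] [Countable ι] {f : ι → α →₁[μ] E} (hf : Summable fun k => ‖f k‖) :
    ⇑(∑' k, f k) =ᵐ[μ] fun t => ∑' k, f k t :=
  Lp.coeFn_tsum (tsum_enorm_ne_top_iff_summable_norm.2 hf)

section ConvolutionAlgebra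

variable {G R : Type*} [AddCommGroup G] [MeasurableSpace G] {μ : Measure G} [NormedCommRing R]
  [NormedAlgebra ℝ R]

local notation:67 f "∗" g:66 => convolution f g (ContinuousLinearMap.mul ℝ _) μ

theorem comp_neg_convolution_comp_neg [MeasurableNeg G] [μ.IsNegInvariant] (f g : G → R) :
    (f ∘ Neg.neg) ∗ (g ∘ Neg.neg) = (f ∗ g) ∘ Neg.neg := by
  ext t
  simp only [convolution, Function.comp_apply]
  rw [← integral_neg_eq_self]
  simp only [neg_neg, sub_neg_eq_add, neg_add']

variable [MeasurableAdd₂ G] [MeasurableNeg G] [SFinite μ] [μ.IsAddLeftInvariant]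

theorem convolution_add_ae_eq {f g h : G → R} (hf : Integrable f μ) (hg : Integrable g μ)
    (hh : Integrable h μ) : f ∗ (g + h) =ᵐ[μ] f ∗ g + f ∗ h := by
  filter_upwards [hf.ae_convolution_exists (.mul ℝ R) hg, hf.ae_convolution_exists (.mul ℝ R) hh]
    with t hfg hfh using hfg.distrib_add hfh

theorem convolution_assoc_ae_eq [CompleteSpace R] {f g h : G → R} (hf : Integrable f μ)
    (hg : Integrable g μ) (hh : Integrable h μ) : (f ∗ g) ∗ h =ᵐ[μ] f ∗ (g ∗ h) := by
  have hgh := hg.norm.integrable_convolution (.mul ℝ ℝ) hh.norm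
  filter_upwards [hf.norm.ae_convolution_exists (.mul ℝ ℝ) hgh] with t hfgh
  exact convolution_assoc _ _ _ _ mul_assoc hf.1 hg.1 hh.1
    (hf.ae_convolution_exists _ hg) (hg.norm.ae_convolution_exists _ hh.norm) hfgh

theorem integral_norm_convolution_le_s8 {f g : G → R} (hf : Integrable f μ) (hg : Integrable g μ) :
    ∫ t, ‖(f ∗ g) t‖ ∂μ ≤ (∫ t, ‖f t‖ ∂μ) * ∫ t, ‖g t‖ ∂μ := by
  rw [← ContinuousLinearMap.mul_apply' ℝ, ← integral_convolution _ hf.norm hg.norm]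
  refine integral_mono_ae (hf.integrable_convolution _ hg).norm
    (hf.norm.integrable_convolution _ hg.norm) ?_
  filter_upwards [hf.norm.ae_convolution_exists (.mul ℝ ℝ) hg.norm] with t ht
  exact norm_integral_le_of_norm_le ht (.of_forall fun s => norm_mul_le _ _)

/-- The convolution product on `L¹(G)`. -/
noncomputable instance instMulL1 : Mul (G →₁[μ] R) where
  mul f g := ((L1.integrable_coeFn f).integrable_convolution (.mul ℝ R)
    (L1.integrable_coeFn g)).toL1 (f ∗ g)

theorem coeFn_L1_mul (f g : G →₁[μ] R) : ⇑(f * g) =ᵐ[μ] f ∗ g :=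
  Integrable.coeFn_toL1 _

theorem L1_mul_add (f g h : G →₁[μ] R) : f * (g + h) = f * g + f * h := by
  refine Lp.ext ?_
  calc ⇑(f * (g + h)) =ᵐ[μ] f ∗ ⇑(g + h) := coeFn_L1_mul _ _
    _ = f ∗ (⇑g + ⇑h) := convolution_congr _ .rfl (Lp.coeFn_add g h)
    _ =ᵐ[μ] f ∗ g + f ∗ h := convolution_add_ae_eq (L1.integrable_coeFn f)
      (L1.integrable_coeFn g) (L1.integrable_coeFn h)
    _ =ᵐ[μ] ⇑(f * g) + ⇑(f * h) := ((coeFn_L1_mul f g).add (coeFn_L1_mul f h)).symm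
    _ =ᵐ[μ] ⇑(f * g + f * h) := (Lp.coeFn_add _ _).symm

theorem L1_mul_assoc [CompleteSpace R] (f g h : G →₁[μ] R) : f * g * h = f * (g * h) := by
  refine Lp.ext ?_
  calc ⇑(f * g * h) =ᵐ[μ] ⇑(f * g) ∗ h := coeFn_L1_mul _ _
    _ = (f ∗ g) ∗ h := convolution_congr _ (coeFn_L1_mul f g) .rfl
    _ =ᵐ[μ] f ∗ (g ∗ h) := convolution_assoc_ae_eq (L1.integrable_coeFn f)
      (L1.integrable_coeFn g) (L1.integrable_coeFn h)
    _ = f ∗ ⇑(g * h) := (convolution_congr _ .rfl (coeFn_L1_mul g h)).symm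
    _ =ᵐ[μ] ⇑(f * (g * h)) := (coeFn_L1_mul _ _).symm

theorem norm_L1_mul_le (f g : G →₁[μ] R) : ‖f * g‖ ≤ ‖f‖ * ‖g‖ := by
  simp only [L1.norm_eq_integral_norm]
  exact (integral_congr_ae ((coeFn_L1_mul f g).fun_comp norm)).trans_le
    (integral_norm_convolution_le_s8 (L1.integrable_coeFn f) (L1.integrable_coeFn g))

theorem L1_smul_mul (c : ℝ) (f g : G →₁[μ] R) : c • f * g = c • (f * g) := by
  refine Lp.ext ?_
  calc ⇑(c • f * g) =ᵐ[μ] ⇑(c • f) ∗ g := coeFn_L1_mul _ _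
    _ = (c • ⇑f) ∗ g := convolution_congr _ (Lp.coeFn_smul c f) .rfl
    _ = c • (f ∗ g) := smul_convolution
    _ =ᵐ[μ] c • ⇑(f * g) := (coeFn_L1_mul f g).symm.const_smul c
    _ =ᵐ[μ] ⇑(c • (f * g)) := (Lp.coeFn_smul _ _).symm

theorem L1_mul_comm [μ.IsNegInvariant] (f g : G →₁[μ] R) : f * g = g * f := by
  have flip_mul : (ContinuousLinearMap.mul ℝ R).flip = .mul ℝ R := by
    ext; simp
  refine Lp.ext ((coeFn_L1_mul f g).trans (.trans (.of_eq ?_) (coeFn_L1_mul g f).symm))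
  rw [← convolution_flip, flip_mul]

variable [CompleteSpace R] [μ.IsNegInvariant]

/-- The convolution algebra `L¹(G)`. -/
noncomputable instance instNonUnitalNormedCommRingL1 :
    NonUnitalNormedCommRing (G →₁[μ] R) where
  __ := (inferInstance : NormedAddCommGroup (G →₁[μ] R))
  __ := instMulL1
  left_distrib := L1_mul_add
  right_distrib f g h := by simp only [L1_mul_comm _ h, L1_mul_add]
  mul_comm := L1_mul_comm
  zero_mul f := by simpa [L1_mul_comm 0] using L1_mul_add f 0 0
  mul_zero f := by simpa using L1_mul_add f 0 0
  mul_assoc := L1_mul_assoc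
  norm_mul_le := norm_L1_mul_le

instance instIsScalarTowerL1 : IsScalarTower ℝ (G →₁[μ] R) (G →₁[μ] R) where
  smul_assoc := L1_smul_mul

instance instSMulCommClassL1 : SMulCommClass ℝ (G →₁[μ] R) (G →₁[μ] R) where
  smul_comm c f g := by simp only [smul_eq_mul, mul_comm f, L1_smul_mul]

/-- The elements of `L¹(G)` that vanish almost everywhere outside the additive submonoid `I`.
On `ℝ`, the causal functions are those supported in the nonnegative half-line, the anticausal ones
those supported in its negative. -/
def supportedIn (I : AddSubmonoid G) : NonUnitalSubring (G →₁[μ] R) where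
  carrier := {f | ∀ᵐ t ∂μ, t ∉ I → f t = 0}
  zero_mem' := by
    filter_upwards [Lp.coeFn_zero R 1 μ] with t ht _ using by simpa using ht
  add_mem' {f g} hf hg := by
    filter_upwards [hf, hg, Lp.coeFn_add f g] with t hf hg hfg ht
    rw [hfg, Pi.add_apply, hf ht, hg ht, add_zero]
  neg_mem' {f} hf := by
    filter_upwards [hf, Lp.coeFn_neg f] with t hf hneg ht
    rw [hneg, Pi.neg_apply, hf ht, neg_zero]
  mul_mem' {f g} hf hg := by
    filter_upwards [coeFn_L1_mul f g] with t hfg ht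
    rw [hfg]
    refine integral_eq_zero_of_ae ?_
    filter_upwards [hf, (quasiMeasurePreserving_sub_left μ t).ae hg] with s hf hg
    rcases em (s ∈ I) with hs | hs
    · have : t - s ∉ I := fun h => ht (by simpa using I.add_mem hs h)
      simp [hg this]
    · simp [hf hs]

theorem smul_mem_supportedIn (c : ℝ) {I : AddSubmonoid G} {f : G →₁[μ] R}
    (hf : f ∈ supportedIn I) : c • f ∈ supportedIn I := by
  filter_upwards [hf, Lp.coeFn_smul c f] with t hf hsmul ht
  rw [hsmul, Pi.smul_apply, hf ht, smul_zero]

theorem tsum_mem_supportedIn {ι : Type*} [Countable ι] {I : AddSubmonoid G}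
    {f : ι → G →₁[μ] R} (hf : ∀ k, f k ∈ supportedIn I) (hsum : Summable fun k => ‖f k‖) :
    ∑' k, f k ∈ supportedIn I := by
  filter_upwards [coeFn_L1_tsum hsum, ae_all_iff.2 hf] with t ht h hI
  simp only [ht, h _ hI, tsum_zero]

theorem disjoint_supportedIn {I J : AddSubmonoid G} (hIJ : μ (I ∩ J) = 0) :
    Disjoint (supportedIn I : NonUnitalSubring (G →₁[μ] R)) (supportedIn J) := by
  rw [disjoint_iff_inf_le]
  rintro f ⟨hI, hJ⟩
  refine NonUnitalSubring.mem_bot.2 (Lp.ext ?_)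
  filter_upwards [hI, hJ, measure_eq_zero_iff_ae_notMem.1 hIJ, Lp.coeFn_zero R 1 μ]
    with t hI hJ hIJ h0
  rw [h0]
  exact (not_and_or.1 hIJ).elim hI hJ

/-- Time reversal `f ↦ f(-·)` on the convolution algebra `L¹(G)`. -/
noncomputable def reverse : (G →₁[μ] R) →ₙ+* (G →₁[μ] R) where
  toFun f := Lp.compMeasurePreserving Neg.neg (Measure.measurePreserving_neg μ) f
  map_zero' := map_zero _
  map_add' := map_add _
  map_mul' f g := by
    have coeFn_reverse (h : G →₁[μ] R) := Lp.coeFn_compMeasurePreserving (f := Neg.neg) h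
      (Measure.measurePreserving_neg μ)
    refine Lp.ext ((coeFn_reverse (f * g)).trans (.trans ?_ (coeFn_L1_mul _ _).symm))
    rw [convolution_congr _ (coeFn_reverse f) (coeFn_reverse g), comp_neg_convolution_comp_neg]
    exact (quasiMeasurePreserving_neg μ).ae_eq_comp (coeFn_L1_mul f g)

theorem coeFn_reverse (f : G →₁[μ] R) : ⇑(reverse f) =ᵐ[μ] fun t => f (-t) :=
  Lp.coeFn_compMeasurePreserving f (Measure.measurePreserving_neg μ)

theorem reverse_mem_supportedIn {I : AddSubmonoid G} {f : G →₁[μ] R} (hf : f ∈ supportedIn I) :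
    reverse f ∈ supportedIn (-I) := by
  filter_upwards [coeFn_reverse f, (quasiMeasurePreserving_neg μ).ae hf] with t ht h hI
  rw [ht, h hI]

end ConvolutionAlgebra

section Quasiregular

/-- A non-unital subring, seen as a submonoid for the circle operation `x ∘ y = y + x + x * y`. It
encodes the measures `δ + F` with `F` in the subring. -/
def quasiSubmonoid {R : Type*} [NonUnitalRing R] (C : NonUnitalSubring R) :
    Submonoid (PreQuasiregular R) where
  carrier := {x | x.val ∈ C}
  one_mem' := C.zero_mem
  mul_mem' hx hy := C.add_mem (C.add_mem hy hx) (C.mul_mem hx hy)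

theorem mem_quasiSubmonoid {R : Type*} [NonUnitalRing R] {C : NonUnitalSubring R}
    {x : PreQuasiregular R} : x ∈ quasiSubmonoid C ↔ x.val ∈ C :=
  Iff.rfl

theorem disjoint_quasiSubmonoid {R : Type*} [NonUnitalRing R] {C A : NonUnitalSubring R}
    (h : Disjoint C A) : Disjoint (quasiSubmonoid C) (quasiSubmonoid A) := by
  rw [disjoint_iff_inf_le] at h ⊢
  exact fun x hx => PreQuasiregular.equiv.symm.injective (NonUnitalSubring.mem_bot.1 (h hx))

theorem eq_of_mul_factorization_mem {M : Type*} [Monoid M] {C A : Submonoid M} (h : Disjoint C A)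
    {x u u' v v' : M} (hx : x ∈ C) (hu : u ∈ C) (hv' : v' ∈ A) (huu' : u * u' = 1)
    (hvv' : v * v' = 1) (hxuv : x * (u * v) ∈ A) : x = u' := by
  have hxu : x * u = x * (u * v) * v' := by rw [mul_assoc, mul_assoc u, hvv', mul_one]
  have hxu_one : x * u = 1 :=
    disjoint_iff_inf_le.1 h ⟨C.mul_mem hx hu, hxu ▸ A.mul_mem hxuv hv'⟩
  calc x = x * u * u' := by rw [mul_assoc, huu', mul_one]
    _ = u' := by rw [hxu_one, one_mul]

variable {R : Type*} [NonUnitalRing R]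

theorem val_mk_neg_mul (X : R) (y : PreQuasiregular R) :
    (PreQuasiregular.mk (-X) * y).val = y.val - (X + X * y.val) := by
  rw [PreQuasiregular.val_mul, neg_mul, sub_add_eq_sub_sub, sub_eq_add_neg, sub_eq_add_neg]

theorem iterate_mul_left_self_comm (F : R) (k : ℕ) : (F * ·)^[k] F * F = F * (F * ·)^[k] F := by
  induction k with
  | zero => rfl
  | succ k ih => rw [Function.iterate_succ_apply', mul_assoc, ih]

variable [TopologicalSpace R] [IsTopologicalRing R] [T2Space R] {F : R}

theorem tsum_iterate_mul_left_self (hF : Summable fun k => (F * ·)^[k] F) :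
    ∑' k, (F * ·)^[k] F = F + F * ∑' k, (F * ·)^[k] F := by
  rw [← hF.tsum_mul_left, hF.tsum_eq_zero_add]
  simp only [Function.iterate_succ_apply', Function.iterate_zero_apply]

theorem tsum_iterate_mul_left_self_comm (hF : Summable fun k => (F * ·)^[k] F) :
    (∑' k, (F * ·)^[k] F) * F = F * ∑' k, (F * ·)^[k] F := by
  rw [← hF.tsum_mul_left, ← hF.tsum_mul_right]
  simp only [iterate_mul_left_self_comm]

theorem mk_neg_mul_mk_tsum (hF : Summable fun k => (F * ·)^[k] F) :
    PreQuasiregular.mk (-F) * .mk (∑' k, (F * ·)^[k] F) = 1 := by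
  refine PreQuasiregular.equiv.symm.injective ((val_mk_neg_mul _ _).trans ?_)
  exact sub_eq_zero.2 (tsum_iterate_mul_left_self hF)

theorem mk_tsum_mul_mk_neg (hF : Summable fun k => (F * ·)^[k] F) :
    PreQuasiregular.mk (∑' k, (F * ·)^[k] F) * .mk (-F) = 1 := by
  refine PreQuasiregular.equiv.symm.injective ?_
  change -F + ∑' k, (F * ·)^[k] F + (∑' k, (F * ·)^[k] F) * -F = 0
  rw [mul_neg, tsum_iterate_mul_left_self_comm hF, ← sub_eq_add_neg, neg_add_eq_sub, sub_sub,
    ← tsum_iterate_mul_left_self hF, sub_self]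

end Quasiregular

section Matrix

variable {n : Type*} [Fintype n]

/-- The matrices all of whose entries lie in the non-unital subring `C`. -/
def matricesOver {A : Type*} [NonUnitalRing A] (C : NonUnitalSubring A) :
    NonUnitalSubring (Matrix n n A) where
  __ := C.toAddSubgroup.matrix
  mul_mem' hF hG i j := sum_mem fun k _ => C.mul_mem (hF i k) (hG k j)

theorem disjoint_matricesOver {A : Type*} [NonUnitalRing A] {C C' : NonUnitalSubring A}
    (h : Disjoint C C') :
    Disjoint (matricesOver C : NonUnitalSubring (Matrix n n A)) (matricesOver C') := by
  rw [disjoint_iff_inf_le] at h ⊢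
  exact fun F hF => NonUnitalSubring.mem_bot.2 <| Matrix.ext fun i j =>
    NonUnitalSubring.mem_bot.1 (h ⟨hF.1 i j, hF.2 i j⟩)

section TwistedTranspose

variable [DecidableEq n] {R A : Type*} [CommRing R] [NonUnitalCommRing A] [Module R A]

/-- The matrix `S * (σ F)ᵀ * S⁻¹`, where `S` has scalar entries and `σ` acts on the entries of `F`.
For `σ` the time reversal, this is the passage from `Ψ` to `q`. The entries are written out because
the scalars act on `A` without embedding into it. -/
noncomputable def twistedTranspose (S : Matrix n n R) (σ : A →ₙ+* A) :
    Matrix n n A →+ Matrix n n A where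
  toFun F := Matrix.of fun i j => ∑ l, ∑ k, (S i k * S⁻¹ l j) • σ (F l k)
  map_zero' := by ext; simp
  map_add' F G := by ext; simp [Finset.sum_add_distrib]

theorem twistedTranspose_apply (S : Matrix n n R) (σ : A →ₙ+* A) (F : Matrix n n A) (i j : n) :
    twistedTranspose S σ F i j = ∑ l, ∑ k, (S i k * S⁻¹ l j) • σ (F l k) :=
  rfl

variable [IsScalarTower R A A] [SMulCommClass R A A]

theorem map_inr_twistedTranspose (S : Matrix n n R) (σ : A →ₙ+* A) (F : Matrix n n A) :
    (twistedTranspose S σ F).map (Unitization.inrNonUnitalAlgHom R A) =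
      S.map (algebraMap R _) * ((F.map σ)ᵀ).map (Unitization.inrNonUnitalAlgHom R A) *
        S⁻¹.map (algebraMap R _) := by
  ext1 i j
  simp only [Matrix.mul_apply, Matrix.map_apply, twistedTranspose_apply, Matrix.transpose_apply,
    Finset.sum_mul, map_sum]
  refine Finset.sum_congr rfl fun l _ => Finset.sum_congr rfl fun k _ => ?_
  rw [mul_right_comm, ← map_mul, ← Algebra.smul_def, map_smul]

theorem twistedTranspose_mul {S : Matrix n n R} (hS : IsUnit S.det) (σ : A →ₙ+* A)
    (F G : Matrix n n A) :
    twistedTranspose S σ (F * G) = twistedTranspose S σ G * twistedTranspose S σ F := by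
  have inv_mul_self : S⁻¹.map (algebraMap R (Unitization R A)) * S.map (algebraMap R _) = 1 := by
    rw [← Matrix.map_mul, Matrix.nonsing_inv_mul S hS]
    exact Matrix.map_one _ (map_zero _) (map_one _)
  have inr_injective : Function.Injective (Unitization.inrNonUnitalAlgHom R A) :=
    Unitization.inr_injective
  refine Matrix.map_injective inr_injective ?_
  simp only [Matrix.map_mul, map_inr_twistedTranspose, Matrix.transpose_mul, Matrix.mul_assoc]
  rw [← Matrix.mul_assoc (S⁻¹.map _) (S.map _), inv_mul_self, Matrix.one_mul]

theorem mk_twistedTranspose_mul_mk {S : Matrix n n R} (hS : IsUnit S.det) (σ : A →ₙ+* A)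
    {F G : Matrix n n A} (h : PreQuasiregular.mk F * .mk G = 1) :
    PreQuasiregular.mk (twistedTranspose S σ G) * .mk (twistedTranspose S σ F) = 1 := by
  refine PreQuasiregular.equiv.symm.injective ?_
  change twistedTranspose S σ F + twistedTranspose S σ G +
    twistedTranspose S σ G * twistedTranspose S σ F = 0
  have h : G + F + F * G = 0 := congrArg PreQuasiregular.val h
  rw [← twistedTranspose_mul hS, ← map_add, ← map_add, add_comm F, h, map_zero]

end TwistedTranspose

theorem norm_iterate_mul_left_apply_le [DecidableEq n] {A : Type*} [NonUnitalSeminormedRing A]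
    (F : Matrix n n A) (k : ℕ) (i j : n) :
    ‖((F * ·)^[k] F) i j‖ ≤ (F.map norm ^ (k + 1)) i j := by
  induction k generalizing i with
  | zero => simp
  | succ k ih =>
    rw [Function.iterate_succ_apply', pow_succ', Matrix.mul_apply, Matrix.mul_apply]
    refine (norm_sum_le _ _).trans (Finset.sum_le_sum fun l _ => (norm_mul_le _ _).trans ?_)
    exact mul_le_mul_of_nonneg_left (ih l) (norm_nonneg _)

theorem summable_norm_pow_of_spectralRadius_lt_one_s8 {A : Type*} [NormedRing A] [NormedAlgebra ℂ A]
    [CompleteSpace A] {a : A} (ha : spectralRadius ℂ a < 1) : Summable fun k => ‖a ^ k‖ := by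
  obtain ⟨r, har, hr⟩ := ENNReal.lt_iff_exists_nnreal_btwn.1 ha
  have hr : r < 1 := mod_cast hr
  have gelfand := spectrum.pow_nnnorm_pow_one_div_tendsto_nhds_spectralRadius a
  refine .of_norm_bounded_eventually_nat (summable_geometric_of_lt_one r.coe_nonneg hr) ?_
  filter_upwards [gelfand.eventually_lt_const har, eventually_ne_atTop 0] with k hk hk0
  rw [one_div, ENNReal.rpow_inv_lt_iff (by positivity), ENNReal.rpow_natCast] at hk
  rw [norm_norm]
  exact_mod_cast hk.le

attribute [local instance] Matrix.linftyOpNormedRing Matrix.linftyOpNormedAlgebra in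
theorem summable_pow_apply_of_spectralRadius_lt_one [DecidableEq n] {N : Matrix n n ℝ}
    (hN : spectralRadius ℂ (N.map Complex.ofReal) < 1) (i j : n) :
    Summable fun k => (N ^ k) i j := by
  have hsum : Summable fun k => N.map Complex.ofReal ^ k :=
    (summable_norm_pow_of_spectralRadius_lt_one_s8 hN).of_norm
  refine Complex.summable_ofReal.1 ((Pi.summable.1 (Pi.summable.1 hsum i) j).congr fun k => ?_)
  exact congr_fun₂ (map_pow Complex.ofRealHom.mapMatrix N k) i j |>.symm

theorem summable_norm_iterate_mul_left [DecidableEq n] {A : Type*} [NonUnitalNormedRing A]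
    {F : Matrix n n A} (hF : spectralRadius ℂ ((F.map norm).map Complex.ofReal) < 1) (i j : n) :
    Summable fun k => ‖((F * ·)^[k] F) i j‖ :=
  .of_nonneg_of_le (fun _ => norm_nonneg _) (norm_iterate_mul_left_apply_le F · i j)
    ((summable_nat_add_iff 1).2 (summable_pow_apply_of_spectralRadius_lt_one hF i j))

theorem summable_iterate_mul_left [DecidableEq n] {A : Type*} [NonUnitalNormedRing A]
    [CompleteSpace A] {F : Matrix n n A}
    (hF : spectralRadius ℂ ((F.map norm).map Complex.ofReal) < 1) :
    Summable fun k => (F * ·)^[k] F :=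
  Pi.summable.2 fun i => Pi.summable.2 fun j => (summable_norm_iterate_mul_left hF i j).of_norm

theorem tsum_iterate_mul_left_apply [DecidableEq n] {A : Type*} [NonUnitalNormedRing A]
    [CompleteSpace A] {F : Matrix n n A}
    (hF : spectralRadius ℂ ((F.map norm).map Complex.ofReal) < 1) (i j : n) :
    (∑' k, (F * ·)^[k] F) i j = ∑' k, ((F * ·)^[k] F) i j := by
  have hsum := summable_iterate_mul_left hF
  exact (congrFun (tsum_apply hsum) j).trans (tsum_apply (Pi.summable.1 hsum i))

end Matrix

section Represents

variable {n α : Type*} [MeasurableSpace α] {μ : Measure α}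

/-- The matrix `M` over `L¹(μ)` is the entrywise almost-everywhere class of the matrix-valued
function `F`. This transfers statements about functions to the convolution algebra. -/
def Represents (M : Matrix n n (α →₁[μ] ℝ)) (F : α → Matrix n n ℝ) : Prop :=
  ∀ i j, M i j =ᵐ[μ] fun t => F t i j

theorem exists_represents {F : α → Matrix n n ℝ} (hF : ∀ i j, Integrable (F · i j) μ) :
    ∃ M, Represents (μ := μ) M F :=
  ⟨Matrix.of fun i j => (hF i j).toL1, fun i j => (hF i j).coeFn_toL1⟩

namespace Represents

variable {M N : Matrix n n (α →₁[μ] ℝ)} {F H : α → Matrix n n ℝ}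

theorem ae_eq [Finite n] (hF : Represents M F) (hH : Represents M H) : ∀ᵐ t ∂μ, F t = H t := by
  simp only [← Matrix.ext_iff, ae_all_iff]
  exact fun i j => (hF i j).symm.trans (hH i j)

theorem add (hM : Represents M F) (hN : Represents N H) :
    Represents (M + N) fun t => F t + H t :=
  fun i j => (Lp.coeFn_add _ _).trans ((hM i j).add (hN i j))

theorem sub (hM : Represents M F) (hN : Represents N H) :
    Represents (M - N) fun t => F t - H t :=
  fun i j => (Lp.coeFn_sub _ _).trans ((hM i j).sub (hN i j))

end Represents
end Represents

section MatricesOverConvolutionAlgebra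

variable {n G : Type*} [Fintype n] [AddCommGroup G] [MeasurableSpace G] [MeasurableAdd₂ G]
  [MeasurableNeg G] {μ : Measure G} [SFinite μ] [μ.IsAddLeftInvariant] [μ.IsNegInvariant]
  {M : Matrix n n (G →₁[μ] ℝ)} {I : AddSubmonoid G}

theorem Represents.mem_matricesOver_supportedIn {F : G → Matrix n n ℝ} (hM : Represents M F)
    (hF : ∀ i j, ∀ᵐ t ∂μ, t ∉ I → F t i j = 0) : M ∈ matricesOver (supportedIn I) := fun i j => by
  filter_upwards [hM i j, hF i j] with t hM hF ht
  rw [hM, hF ht]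

theorem tsum_iterate_mul_left_mem_matricesOver_supportedIn [DecidableEq n]
    (hM : M ∈ matricesOver (supportedIn I))
    (hr : spectralRadius ℂ ((M.map norm).map Complex.ofReal) < 1) :
    ∑' k, (M * ·)^[k] M ∈ matricesOver (supportedIn I) := fun i j => by
  have hiter (k : ℕ) : (M * ·)^[k] M ∈ matricesOver (supportedIn I) := by
    induction k with
    | zero => exact hM
    | succ k ih => rw [Function.iterate_succ_apply']; exact mul_mem hM ih
  rw [tsum_iterate_mul_left_apply hr]
  exact tsum_mem_supportedIn (hiter · i j) (summable_norm_iterate_mul_left hr i j)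

theorem twistedTranspose_reverse_mem_matricesOver_supportedIn [DecidableEq n] (S : Matrix n n ℝ)
    (hM : M ∈ matricesOver (supportedIn I)) :
    twistedTranspose S reverse M ∈ matricesOver (supportedIn (-I)) := fun i j => by
  rw [twistedTranspose_apply]
  exact sum_mem fun l _ => sum_mem fun k _ =>
    smul_mem_supportedIn _ (reverse_mem_supportedIn (hM l k))

end MatricesOverConvolutionAlgebra

namespace Represents

variable {D : ℕ} {M N : Matrix (Fin D) (Fin D) (ℝ →₁[volume] ℝ)}
  {F H : ℝ → Matrix (Fin D) (Fin D) ℝ}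

theorem mul (hM : Represents M F) (hN : Represents N H) :
    Represents (M * N) (mconv D F H) := fun i j => by
  have hterm (k : Fin D) : ⇑(M i k * N k j) =ᵐ[volume] fun t => ∫ s, F s i k * H (t - s) k j :=
    (coeFn_L1_mul _ _).trans (.of_eq (convolution_congr _ (hM i k) (hN k j)))
  filter_upwards [Lp.coeFn_fun_finsetSum Finset.univ fun k => M i k * N k j, ae_all_iff.2 hterm]
    with t hsum hterm
  simp only [Matrix.mul_apply, hsum, hterm, mconv, Matrix.of_apply]

theorem iterate_mul_left (hM : Represents M F) (k : ℕ) :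
    Represents ((M * ·)^[k] M) (mconvIter D F k) := by
  induction k with
  | zero => exact hM
  | succ k ih =>
    rw [Function.iterate_succ_apply']
    exact hM.mul ih

theorem kernelNorm_abs (hM : Represents M F) :
    kernelNorm D (fun t => (F t).map abs) = M.map norm := by
  ext i j
  rw [Matrix.map_apply, L1.norm_eq_integral_norm]
  exact integral_congr_ae ((hM i j).fun_comp norm).symm

theorem tsum_iterate_mul_left (hM : Represents M F)
    (hr : spectralRadius ℂ ((M.map norm).map Complex.ofReal) < 1) :
    Represents (∑' k, (M * ·)^[k] M) (hawkesPsi D F) := fun i j => by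
  rw [tsum_iterate_mul_left_apply hr]
  filter_upwards [coeFn_L1_tsum (summable_norm_iterate_mul_left hr i j),
    ae_all_iff.2 fun k => hM.iterate_mul_left k i j] with t htsum hiter
  simp only [htsum, hiter, hawkesPsi, Matrix.of_apply]

theorem twistedTranspose_reverse {S : Matrix (Fin D) (Fin D) ℝ}
    (hM : Represents M (hawkesPsi D F)) :
    Represents (twistedTranspose S reverse M) (hawkesQ D F S) := fun i j => by
  have hterm (l k : Fin D) : ⇑((S i k * S⁻¹ l j) • reverse (M l k)) =ᵐ[volume] fun t =>
      S i k * S⁻¹ l j * hawkesPsi D F (-t) l k := by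
    filter_upwards [Lp.coeFn_smul (S i k * S⁻¹ l j) (reverse (M l k)), coeFn_reverse (M l k),
      (quasiMeasurePreserving_neg volume).ae (hM l k)] with t hsmul hrev hM
    rw [hsmul, Pi.smul_apply, hrev, hM, smul_eq_mul]
  rw [twistedTranspose_apply]
  filter_upwards [Lp.coeFn_fun_finsetSum Finset.univ fun l =>
      ∑ k, (S i k * S⁻¹ l j) • reverse (M l k),
    ae_all_iff.2 fun l => Lp.coeFn_fun_finsetSum Finset.univ fun k =>
      (S i k * S⁻¹ l j) • reverse (M l k),
    ae_all_iff.2 fun l => ae_all_iff.2 (hterm l)] with t hsum hsum' hterm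
  simp only [hsum, hsum', hterm, hawkesQ, Matrix.mul_apply, Matrix.transpose_apply, Finset.sum_mul]
  simp only [mul_right_comm]

theorem hawkesG_factorization (hM : Represents M F)
    (hr : spectralRadius ℂ ((M.map norm).map Complex.ofReal) < 1) (S : Matrix (Fin D) (Fin D) ℝ) :
    Represents (PreQuasiregular.mk (∑' k, (M * ·)^[k] M) *
      .mk (twistedTranspose S reverse (∑' k, (M * ·)^[k] M))).val (hawkesG D F S) := by
  have hΨ := hM.tsum_iterate_mul_left hr
  have hQ := hΨ.twistedTranspose_reverse (S := S)
  rw [PreQuasiregular.val_mul, add_comm (twistedTranspose _ _ _)]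
  exact (hΨ.add hQ).add (hΨ.mul hQ)

end Represents

theorem disjoint_supportedIn_nonneg :
    Disjoint (supportedIn (AddSubmonoid.nonneg ℝ) : NonUnitalSubring (ℝ →₁[volume] ℝ))
      (supportedIn (-AddSubmonoid.nonneg ℝ)) := by
  refine disjoint_supportedIn (measure_mono_null (t := {0}) ?_ (measure_singleton 0))
  rintro t ⟨ht, ht'⟩
  exact le_antisymm (neg_nonneg.1 ht') ht

theorem isUnit_det_of_isDiag_of_pos {n : Type*} [Fintype n] [DecidableEq n] {S : Matrix n n ℝ}
    (hdiag : S.IsDiag) (hpos : ∀ i, 0 < S i i) : IsUnit S.det := by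
  rw [← hdiag.diagonal_diag, Matrix.det_diagonal]
  exact (Finset.prod_pos fun i _ => hpos i).ne'.isUnit

namespace IsHawkesKernel

variable {D : ℕ} {Φ : ℝ → Matrix (Fin D) (Fin D) ℝ}

theorem map_abs (hΦ : IsHawkesKernel D Φ) : (fun t => (Φ t).map abs) = Φ :=
  funext fun t => Matrix.ext fun i j => abs_of_nonneg (hΦ.2.1 t i j)

theorem ae_causal (hΦ : IsHawkesKernel D Φ) (i j : Fin D) : ∀ᵐ t : ℝ, t < 0 → Φ t i j = 0 :=
  .of_forall fun t ht => by rw [hΦ.2.2.2 t ht, Matrix.zero_apply]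

end IsHawkesKernel

theorem hawkes_wienerHopf_unique_general (D : ℕ) (Φ : ℝ → Matrix (Fin D) (Fin D) ℝ)
    (hΦint : ∀ i j, Integrable fun t => Φ t i j)
    (hΦcausal : ∀ i j, ∀ᵐ t : ℝ, t < 0 → Φ t i j = 0)
    (hH : HypothesisH D fun t => (Φ t).map abs)
    (S : Matrix (Fin D) (Fin D) ℝ) (hS : IsUnit S.det)
    (χ : ℝ → Matrix (Fin D) (Fin D) ℝ)
    (hχint : ∀ i j, Integrable fun t => χ t i j)
    (hχcausal : ∀ i j, ∀ᵐ t : ℝ, t < 0 → χ t i j = 0)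
    (hsol : ∀ᵐ t : ℝ, 0 < t → hawkesG D Φ S t = χ t + mconv D χ (hawkesG D Φ S) t) :
    ∀ᵐ t : ℝ, χ t = Φ t := by
  obtain ⟨F, hF⟩ := exists_represents hΦint
  obtain ⟨X, hX⟩ := exists_represents hχint
  have hr : spectralRadius ℂ ((F.map norm).map Complex.ofReal) < 1 := hF.kernelNorm_abs ▸ hH
  have hFcausal : F ∈ matricesOver (supportedIn (.nonneg ℝ)) :=
    hF.mem_matricesOver_supportedIn (by simpa using hΦcausal)
  have hXcausal : X ∈ matricesOver (supportedIn (.nonneg ℝ)) :=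
    hX.mem_matricesOver_supportedIn (by simpa using hχcausal)
  have hG := hF.hawkesG_factorization hr S
  set P := ∑' k, (F * ·)^[k] F
  have hanticausal : PreQuasiregular.mk (-X) * (.mk P * .mk (twistedTranspose S reverse P)) ∈
      quasiSubmonoid (matricesOver (supportedIn (-.nonneg ℝ))) := by
    rw [mem_quasiSubmonoid, val_mk_neg_mul]
    refine (hG.sub (hX.add (hX.mul hG))).mem_matricesOver_supportedIn fun i j => ?_
    filter_upwards [hsol] with t ht hpos
    rw [sub_eq_zero.2 (ht (by simpa using hpos)), Matrix.zero_apply]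
  have hXF : PreQuasiregular.mk (-X) = .mk (-F) :=
    eq_of_mul_factorization_mem
      (disjoint_quasiSubmonoid (disjoint_matricesOver disjoint_supportedIn_nonneg))
      (mem_quasiSubmonoid.2 (neg_mem hXcausal))
      (mem_quasiSubmonoid.2 (tsum_iterate_mul_left_mem_matricesOver_supportedIn hFcausal hr))
      (mem_quasiSubmonoid.2
        (twistedTranspose_reverse_mem_matricesOver_supportedIn S (neg_mem hFcausal)))
      (mk_tsum_mul_mk_neg (summable_iterate_mul_left hr))
      (mk_twistedTranspose_mul_mk hS _ (mk_neg_mul_mk_tsum (summable_iterate_mul_left hr)))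
      hanticausal
  obtain rfl : X = F := neg_injective (congrArg PreQuasiregular.val hXF)
  exact hX.ae_eq hF

/-- `Φ` is the unique causal `L¹` solution of the Wiener-Hopf system
`g(t) = χ(t) + (χ ⋆ g)(t)` (`t > 0`) associated with its conditional-expectation matrix `g`. -/
theorem hawkes_wienerHopf_unique (D : ℕ) (hD : 0 < D)
    (Φ : ℝ → Matrix (Fin D) (Fin D) ℝ)
    (hΦ : IsHawkesKernel D Φ) (hH : HypothesisH D Φ)
    (S : Matrix (Fin D) (Fin D) ℝ) (hSdiag : S.IsDiag) (hSpos : ∀ i, 0 < S i i)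
    (χ : ℝ → Matrix (Fin D) (Fin D) ℝ)
    (hχint : ∀ i j, Integrable fun t => χ t i j)
    (hχcausal : ∀ i j, ∀ᵐ t : ℝ, t < 0 → χ t i j = 0)
    (hsol : ∀ᵐ t : ℝ, 0 < t → hawkesG D Φ S t = χ t + mconv D χ (hawkesG D Φ S) t) :
    ∀ᵐ t : ℝ, χ t = Φ t := by
  exact hawkes_wienerHopf_unique_general D Φ hΦ.2.2.1 hΦ.ae_causal (hΦ.map_abs.symm ▸ hH) S
    (isUnit_det_of_isDiag_of_pos hSdiag hSpos) χ hχint hχcausal hsol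
end
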